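/- arXiv:2402.17953 — 3 statements merged into one kernel-verified Lean document; each statement's English description precedes it below -/
import Mathlib

section
/- If a : ℕ → ℝ is bounded and the second differences satisfy lim_{n→∞} ((a_n − a_{n−1}) − (a_{n−1} − a_{n−2})) = 0, then the first differences satisfy lim_{n→∞} (a_n − a_{n−1}) = 0. -/
/-! A discrete Landau–Kolmogorov estimate: if the second differences are at most `δ` in absolute
value from index `n` on, a first-order Taylor expansion gives
`|a (n + k) - a n - k (a (n + 1) - a n)| ≤ k² δ`. With `|a| ≤ C` this yields
`k |a (n + 1) - a n| ≤ 2 C + k² δ`. Given `ε`, fix `k > 4 C / ε` first and then apply this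
with `δ = ε / (2 k)`. -/

open Filter Topology

theorem abs_first_diff_shift_le (a : ℕ → ℝ) (δ : ℝ) (n : ℕ)
    (h : ∀ m ≥ n, |(a (m + 2) - a (m + 1)) - (a (m + 1) - a m)| ≤ δ) (k : ℕ) :
    |(a (n + k + 1) - a (n + k)) - (a (n + 1) - a n)| ≤ k * δ := by
  induction k with
  | zero => simp
  | succ k ih =>
    have h1 := h (n + k) (by omega)
    rw [show n + (k + 1) + 1 = n + k + 2 by ring, show n + (k + 1) = n + k + 1 by ring]
    push_cast
    rw [abs_le] at *
    constructor <;> linarith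

theorem abs_taylor_remainder_le (a : ℕ → ℝ) (δ : ℝ) (hδ : 0 ≤ δ) (n : ℕ)
    (h : ∀ m ≥ n, |(a (m + 2) - a (m + 1)) - (a (m + 1) - a m)| ≤ δ) (k : ℕ) :
    |a (n + k) - a n - k * (a (n + 1) - a n)| ≤ (k : ℝ) ^ 2 * δ := by
  induction k with
  | zero => simp
  | succ k ih =>
    have h1 := abs_first_diff_shift_le a δ n h k
    have h2 : 0 ≤ (k : ℝ) * δ := by positivity
    rw [show n + (k + 1) = n + k + 1 by ring]
    push_cast
    rw [abs_le] at *
    constructor <;> linarith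

/-- Tauberian lemma: if `a` is bounded and its second differences tend to `0`,
then its first differences tend to `0`. -/
theorem first_diff_tendsto_zero_of_bounded_of_second_diff_tendsto_zero
    (a : ℕ → ℝ) (hbdd : ∃ C > 0, ∀ n, |a n| ≤ C)
    (hsecond : Tendsto (fun n => (a (n + 2) - a (n + 1)) - (a (n + 1) - a n))
      atTop (𝓝 0)) :
    Tendsto (fun n => a (n + 1) - a n) atTop (𝓝 0) := by
  obtain ⟨C, hC, hb⟩ := hbdd
  rw [Metric.tendsto_atTop] at hsecond ⊢
  intro ε hε
  obtain ⟨k, hk⟩ := exists_nat_gt (4 * C / ε)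
  have hk0 : (0 : ℝ) < k := lt_trans (by positivity) hk
  rw [div_lt_iff₀ hε] at hk
  obtain ⟨N, hN⟩ := hsecond (ε / (2 * k)) (by positivity)
  refine ⟨N, fun n hn => ?_⟩
  have key := abs_taylor_remainder_le a (ε / (2 * k)) (by positivity) n
    (fun m hm => by simpa [Real.dist_eq] using (hN m (le_trans hn hm)).le) k
  have e : (k : ℝ) ^ 2 * (ε / (2 * k)) = k * ε / 2 := by field_simp
  rw [e] at key
  have h1 := abs_le.1 (hb n)
  have h2 := abs_le.1 (hb (n + k))
  rw [abs_le] at key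
  rw [Real.dist_eq, sub_zero, abs_lt]
  constructor <;> refine lt_of_mul_lt_mul_left ?_ hk0.le <;> linarith
end

section
/- For every (r, θ) ∈ (0,1] × [−π, π] with (r, θ) ≠ (1, 0), one has ∑_{n=0}^∞ q_n·r^n·cos(nθ) < 1. -/
open Real

/-!
Each term of the series is at most `q n`, so the sum is at most `1`, strictly so as soon as one
term is strictly smaller than `q n`. If there were no such term, then `r ^ n * cos (n * θ) = 1`
for every `n` in the support of `q`. As the support contains some `n ≥ 1`, this gives `r = 1`;
moreover `n • θ = 0` in `ℝ / 2πℤ` for all `n` in the support, so the order of `θ` in this group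
divides all of them. By the gcd hypothesis the order is `1`, that is `θ ∈ 2πℤ`, and hence `θ = 0`,
contradicting `(r, θ) ≠ (1, 0)`.
-/

/-- For `(r, θ) ∈ (0,1] × [−π,π]` with `(r,θ) ≠ (1,0)`,
`∑ q_n r^n cos(nθ) < 1`. -/
theorem renewal_cos_series_lt_one (q : ℕ → ℝ)
    (hq_nonneg : ∀ n, 0 ≤ q n) (hq0 : q 0 = 0) (hq_sum : HasSum q 1)
    (hgcd : ∀ d : ℕ, (∀ n, 1 ≤ n → q n ≠ 0 → d ∣ n) → d = 1)
    (r θ : ℝ) (hr0 : 0 < r) (hr1 : r ≤ 1) (hθl : -π ≤ θ) (hθr : θ ≤ π)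
    (hne : ¬ (r = 1 ∧ θ = 0)) :
    ∑' n : ℕ, q n * r ^ n * Real.cos (n * θ) < 1 := by
  have hpow : ∀ n : ℕ, r ^ n ≤ 1 := fun n => pow_le_one₀ hr0.le hr1
  have hpow0 : ∀ n : ℕ, 0 < r ^ n := fun n => pow_pos hr0 n
  have hcoef : ∀ n : ℕ, r ^ n * Real.cos (n * θ) ≤ r ^ n := fun n =>
    mul_le_of_le_one_right (hpow0 n).le (Real.cos_le_one _)
  have hle : ∀ n : ℕ, q n * r ^ n * Real.cos (n * θ) ≤ q n := fun n => by
    rw [mul_assoc]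
    exact mul_le_of_le_one_right (hq_nonneg n) ((hcoef n).trans (hpow n))
  have hsumm : Summable fun n : ℕ => q n * r ^ n * Real.cos (n * θ) := by
    refine Summable.of_norm_bounded hq_sum.summable fun n => ?_
    rw [norm_mul, norm_mul, Real.norm_of_nonneg (hq_nonneg n), Real.norm_of_nonneg (hpow0 n).le,
      mul_assoc]
    exact mul_le_of_le_one_right (hq_nonneg n)
      (mul_le_one₀ (hpow n) (norm_nonneg _) (Real.abs_cos_le_one _))
  obtain ⟨n, hn⟩ : ∃ n : ℕ, q n * r ^ n * Real.cos (n * θ) < q n := by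
    by_contra! hcon
    have hterm : ∀ n : ℕ, q n ≠ 0 → r ^ n * Real.cos (n * θ) = 1 := fun n hn => by
      have h := le_antisymm (hle n) (hcon n)
      rw [mul_assoc] at h
      exact (mul_eq_left₀ hn).1 h
    obtain ⟨m, hm1, hm⟩ : ∃ m, 1 ≤ m ∧ q m ≠ 0 := by
      by_contra! h
      exact absurd (hgcd 2 fun n h1 h2 => absurd (h n h1) h2) (by norm_num)
    have hr : r = 1 := by
      refine (pow_eq_one_iff_of_nonneg hr0.le (by omega : m ≠ 0)).1 (le_antisymm (hpow m) ?_)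
      exact (hterm m hm).symm.le.trans (hcoef m)
    have hord : addOrderOf (θ : Real.Angle) = 1 := by
      refine hgcd _ fun n _ hn => addOrderOf_dvd_of_nsmul_eq_zero ?_
      have hcos : Real.cos (n * θ) = 1 := by simpa [hr] using hterm n hn
      obtain ⟨k, hk⟩ := (Real.cos_eq_one_iff _).1 hcos
      rw [← Real.Angle.natCast_mul_eq_nsmul, ← Real.Angle.coe_zero,
        Real.Angle.angle_eq_iff_two_pi_dvd_sub]
      exact ⟨k, by linarith⟩
    have hcosθ : Real.cos θ = 1 := by
      rw [← Real.Angle.cos_coe, AddMonoid.addOrderOf_eq_one_iff.1 hord, Real.Angle.cos_zero]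
    have hπ := Real.pi_pos
    exact hne ⟨hr, (Real.cos_eq_one_iff_of_lt_of_lt (by linarith) (by linarith)).1 hcosθ⟩
  calc ∑' n : ℕ, q n * r ^ n * Real.cos (n * θ) < ∑' n, q n :=
        hsumm.tsum_lt_tsum hle hn hq_sum.summable
    _ = 1 := hq_sum.tsum_eq
end

section
/- Assume ∑_{i=0}^∞ i·q_i = +∞ (i.e., (i·q_i) is not summable). Then (1 − r·e^{iθ})² / (1 − f_q(r·e^{iθ})) tends to 0 as (r, θ) → (1, 0) within (0,1] × [−π, π] \ {(1,0)}, where f_q(z) = ∑_{n=0}^∞ q_n·z^n; consequently the function H on (0,1] × [−π, π] defined by H(r,θ) = (1 − r·e^{iθ})² / (1 − f_q(r·e^{iθ})) for (r,θ) ≠ (1,0) and H(1,0) = 0 is continuous. -/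
open Real Filter Topology

/-!
Write `z = r e^{iθ}` and `f` for the generating function of `q`. For `‖w‖ ≤ 1` one has
`‖1 - w‖² ≤ 2 Re (1 - w)`; taking `w = zⁿ` and summing against `q` gives
`∑_{n < N} qₙ ‖1 - zⁿ‖² / 2 ≤ Re (1 - f z) ≤ ‖1 - f z‖` for every `N`
(`sum_le_norm_one_sub_genFun`).

* Since `1 - zⁿ = (1 - z) (1 + z + ⋯ + zⁿ⁻¹)`, this bounds `‖1 - f z‖ / ‖1 - z‖²` below by
  `∑_{n < N} qₙ ‖1 + ⋯ + zⁿ⁻¹‖² / 2`, which tends to `∑_{n < N} n² qₙ / 2` as `z → 1`. The latter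
  is unbounded in `N` because the mean `∑ n qₙ` is infinite, whence the limit `0`.
* If `f z = 1`, the same bound forces `zⁿ = 1` whenever `qₙ ≠ 0`, so the order of `z` divides all
  such `n` and aperiodicity gives `z = 1`. Hence the denominator vanishes only at `(1, 0)`, and
  continuity elsewhere follows from uniform convergence of `f` on the closed disc.
-/

lemma summable_genFun {q : ℕ → ℝ} (hq : ∀ n, 0 ≤ q n) (hs : Summable q) {z : ℂ} (hz : ‖z‖ ≤ 1) :
    Summable (fun n : ℕ => (q n : ℂ) * z ^ n) := by
  refine Summable.of_norm_bounded hs fun n => ?_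
  rw [norm_mul, norm_pow, Complex.norm_real, Real.norm_of_nonneg (hq n)]
  exact mul_le_of_le_one_right (hq n) (pow_le_one₀ (norm_nonneg _) hz)

lemma norm_one_sub_sq_le {w : ℂ} (hw : ‖w‖ ≤ 1) : ‖1 - w‖ ^ 2 / 2 ≤ (1 - w).re := by
  have h1 : ‖w‖ ^ 2 ≤ 1 := pow_le_one₀ (norm_nonneg _) hw
  rw [Complex.sq_norm, Complex.normSq_apply] at *
  simp only [Complex.sub_re, Complex.sub_im, Complex.one_re, Complex.one_im]
  nlinarith

lemma sum_le_norm_one_sub_genFun {q : ℕ → ℝ} (hq : ∀ n, 0 ≤ q n) (hs : HasSum q 1) {z : ℂ}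
    (hz : ‖z‖ ≤ 1) (N : ℕ) :
    ∑ n ∈ Finset.range N, q n * (‖1 - z ^ n‖ ^ 2 / 2) ≤ ‖1 - ∑' n : ℕ, (q n : ℂ) * z ^ n‖ := by
  have hpow (n : ℕ) : ‖z ^ n‖ ≤ 1 := by
    rw [norm_pow]; exact pow_le_one₀ (norm_nonneg _) hz
  have h1 : HasSum (fun n : ℕ => (q n : ℂ)) 1 := by
    simpa using Complex.hasSum_ofReal.2 hs
  have h2 := Complex.hasSum_re (h1.sub (summable_genFun hq hs.summable hz).hasSum)
  have key (n : ℕ) : ((q n : ℂ) - q n * z ^ n).re = q n * (1 - z ^ n).re := by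
    rw [← mul_one_sub, Complex.re_ofReal_mul]
  simp only [key] at h2
  have hle (n : ℕ) := mul_le_mul_of_nonneg_left (norm_one_sub_sq_le (hpow n)) (hq n)
  calc _ ≤ ∑ n ∈ Finset.range N, q n * (1 - z ^ n).re := Finset.sum_le_sum fun n _ => hle n
    _ ≤ _ := sum_le_hasSum _ (fun n _ => le_trans (by have := hq n; positivity) (hle n)) h2
    _ ≤ _ := Complex.re_le_norm _

/-- In the infinite-mean case `‖1 - f z‖ ≥ M ‖1 - z‖²` for `z` near `1` in the closed unit disc,
however large `M` is. -/
lemma eventually_mul_sq_le {q : ℕ → ℝ} (hq : ∀ n, 0 ≤ q n) (hs : HasSum q 1)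
    (hmean : ¬ Summable (fun i : ℕ => (i : ℝ) * q i)) (M : ℝ) :
    ∀ᶠ z : ℂ in 𝓝 1, ‖z‖ ≤ 1 → M * ‖1 - z‖ ^ 2 ≤ ‖1 - ∑' n : ℕ, (q n : ℂ) * z ^ n‖ := by
  obtain ⟨N, hN⟩ : ∃ N, 2 * M < ∑ n ∈ Finset.range N, (n : ℝ) * q n := by
    by_contra! h
    exact hmean (summable_of_sum_range_le (fun n => mul_nonneg n.cast_nonneg (hq n)) h)
  let g : ℂ → ℝ := fun z => ∑ n ∈ Finset.range N, q n * (‖∑ k ∈ Finset.range n, z ^ k‖ ^ 2 / 2)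
  have hg : Continuous g := by fun_prop
  have hg1 : M < g 1 := by
    have : (∑ n ∈ Finset.range N, (n : ℝ) * q n) / 2 ≤ g 1 := by
      rw [Finset.sum_div]
      refine Finset.sum_le_sum fun n _ => ?_
      simp only [one_pow, Finset.sum_const, Finset.card_range, nsmul_eq_mul, mul_one,
        Complex.norm_natCast]
      have h : (n : ℝ) ≤ (n : ℝ) ^ 2 := by exact_mod_cast Nat.le_self_pow two_ne_zero n
      nlinarith [mul_le_mul_of_nonneg_left h (hq n)]
    linarith
  filter_upwards [hg.continuousAt.eventually (lt_mem_nhds hg1)] with z hgz hz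
  calc M * ‖1 - z‖ ^ 2 ≤ g z * ‖1 - z‖ ^ 2 := by gcongr
    _ = ∑ n ∈ Finset.range N, q n * (‖1 - z ^ n‖ ^ 2 / 2) := by
      rw [Finset.sum_mul]
      refine Finset.sum_congr rfl fun n _ => ?_
      rw [← geom_sum_mul_neg z n, norm_mul]
      ring
    _ ≤ _ := sum_le_norm_one_sub_genFun hq hs hz N

lemma eq_one_of_genFun_eq_one {q : ℕ → ℝ} (hq : ∀ n, 0 ≤ q n) (hs : HasSum q 1)
    (hgcd : ∀ d : ℕ, (∀ n, 1 ≤ n → q n ≠ 0 → d ∣ n) → d = 1) {z : ℂ} (hz : ‖z‖ ≤ 1)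
    (h : 1 - ∑' n : ℕ, (q n : ℂ) * z ^ n = 0) : z = 1 := by
  refine orderOf_eq_one_iff.1 (hgcd _ fun n _ hn => orderOf_dvd_of_pow_eq_one ?_)
  have h1 := sum_le_norm_one_sub_genFun hq hs hz (n + 1)
  rw [h, norm_zero] at h1
  have h2 := (Finset.single_le_sum (f := fun n => q n * (‖1 - z ^ n‖ ^ 2 / 2))
    (fun i _ => by have := hq i; positivity) (Finset.self_mem_range_succ n)).trans h1
  have h3 : ‖1 - z ^ n‖ ^ 2 / 2 ≤ 0 :=
    nonpos_of_mul_nonpos_right h2 (lt_of_le_of_ne (hq n) hn.symm)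
  have h4 : ‖1 - z ^ n‖ = 0 := by
    apply pow_eq_zero_iff two_ne_zero |>.1
    linarith [sq_nonneg ‖1 - z ^ n‖]
  exact (sub_eq_zero.1 (norm_eq_zero.1 h4)).symm

lemma continuousOn_genFun {q : ℕ → ℝ} (hq : ∀ n, 0 ≤ q n) (hs : Summable q) :
    ContinuousOn (fun z : ℂ => ∑' n : ℕ, (q n : ℂ) * z ^ n) {z | ‖z‖ ≤ 1} := by
  refine continuousOn_tsum (fun n => by fun_prop) hs fun n z hz => ?_
  rw [norm_mul, norm_pow, Complex.norm_real, Real.norm_of_nonneg (hq n)]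
  exact mul_le_of_le_one_right (hq n) (pow_le_one₀ (norm_nonneg _) hz)

lemma norm_polar {r : ℝ} (hr : 0 < r) (t : ℝ) : ‖(r : ℂ) * Complex.exp (t * Complex.I)‖ = r := by
  rw [norm_mul, Complex.norm_exp_ofReal_mul_I, mul_one, Complex.norm_real,
    Real.norm_of_nonneg hr.le]

lemma polar_eq_one {r t : ℝ} (hr : 0 < r) (ht : t ∈ Set.Icc (-π) π)
    (h : (r : ℂ) * Complex.exp (t * Complex.I) = 1) : r = 1 ∧ t = 0 := by
  have hr1 : r = 1 := by rw [← norm_polar hr t, h, norm_one]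
  subst hr1
  refine ⟨rfl, ?_⟩
  have h1 := congrArg Complex.re h
  rw [Complex.ofReal_one, one_mul, Complex.exp_ofReal_mul_I_re, Complex.one_re] at h1
  exact (Real.cos_eq_one_iff_of_lt_of_lt (by linarith [ht.1, Real.pi_pos])
    (by linarith [ht.2, Real.pi_pos])).1 h1

/-- In the infinite-mean case, `(1 - re^{iθ})² / (1 - f_q(re^{iθ})) → 0` as
`(r,θ) → (1,0)` within `(0,1] × [−π,π] \ {(1,0)}`; consequently the extension
`H` with `H(1,0) = 0` is continuous on `(0,1] × [−π,π]`. -/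
theorem renewal_H_tendsto_zero_and_continuous (q : ℕ → ℝ)
    (hq_nonneg : ∀ n, 0 ≤ q n) (hq0 : q 0 = 0) (hq_sum : HasSum q 1)
    (hgcd : ∀ d : ℕ, (∀ n, 1 ≤ n → q n ≠ 0 → d ∣ n) → d = 1)
    (hmean : ¬ Summable (fun i : ℕ => (i : ℝ) * q i))
    (H : ℝ × ℝ → ℂ)
    (hH : ∀ x : ℝ × ℝ, x ≠ (1, 0) →
      H x = (1 - (x.1 : ℂ) * Complex.exp (x.2 * Complex.I)) ^ 2 /
        (1 - ∑' n : ℕ, (q n : ℂ) * ((x.1 : ℂ) * Complex.exp (x.2 * Complex.I)) ^ n))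
    (hH10 : H (1, 0) = 0) :
    Tendsto
      (fun x : ℝ × ℝ =>
        (1 - (x.1 : ℂ) * Complex.exp (x.2 * Complex.I)) ^ 2 /
          (1 - ∑' n : ℕ, (q n : ℂ) * ((x.1 : ℂ) * Complex.exp (x.2 * Complex.I)) ^ n))
      (𝓝[(Set.Ioc (0 : ℝ) 1 ×ˢ Set.Icc (-π) π) \ {(1, 0)}] (1, 0)) (𝓝 0) ∧
    ContinuousOn H (Set.Ioc (0 : ℝ) 1 ×ˢ Set.Icc (-π) π) := by
  have hcont : Continuous fun x : ℝ × ℝ => (x.1 : ℂ) * Complex.exp (x.2 * Complex.I) := by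
    fun_prop
  have hlim : Tendsto
      (fun x : ℝ × ℝ =>
        (1 - (x.1 : ℂ) * Complex.exp (x.2 * Complex.I)) ^ 2 /
          (1 - ∑' n : ℕ, (q n : ℂ) * ((x.1 : ℂ) * Complex.exp (x.2 * Complex.I)) ^ n))
      (𝓝[(Set.Ioc (0 : ℝ) 1 ×ˢ Set.Icc (-π) π) \ {(1, 0)}] (1, 0)) (𝓝 0) := by
    rw [Metric.tendsto_nhds]
    intro ε hε
    have h1 : Tendsto (fun x : ℝ × ℝ => (x.1 : ℂ) * Complex.exp (x.2 * Complex.I))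
        (𝓝 (1, 0)) (𝓝 1) := by
      simpa using hcont.tendsto (1, 0)
    filter_upwards [(h1.mono_left nhdsWithin_le_nhds).eventually
      (eventually_mul_sq_le hq_nonneg hq_sum hmean (2 / ε)), self_mem_nhdsWithin]
      with x hx ⟨⟨hr, _⟩, _⟩
    have hb := hx ((norm_polar hr.1 x.2).trans_le hr.2)
    rw [dist_zero_right, norm_div, norm_pow]
    refine lt_of_le_of_lt (div_le_of_le_mul₀ (norm_nonneg _) (half_pos hε).le ?_) (half_lt_self hε)
    rw [div_mul_eq_mul_div, div_le_iff₀ hε] at hb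
    linarith
  refine ⟨hlim, fun x hx => ?_⟩
  by_cases hx1 : x = (1, 0)
  · subst hx1
    rw [← continuousWithinAt_sdiff_self, ContinuousWithinAt, hH10]
    refine hlim.congr' ?_
    filter_upwards [self_mem_nhdsWithin] with y hy using (hH y hy.2).symm
  · have hmaps : Set.MapsTo (fun x : ℝ × ℝ => (x.1 : ℂ) * Complex.exp (x.2 * Complex.I))
        (Set.Ioc (0 : ℝ) 1 ×ˢ Set.Icc (-π) π) {z | ‖z‖ ≤ 1} :=
      fun y hy => (norm_polar hy.1.1 y.2).trans_le hy.1.2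
    have hden := (continuousOn_genFun hq_nonneg hq_sum.summable).comp hcont.continuousOn hmaps
    have hne : 1 - ∑' n : ℕ, (q n : ℂ) * ((x.1 : ℂ) * Complex.exp (x.2 * Complex.I)) ^ n ≠ 0 := by
      intro h0
      have h1 := polar_eq_one hx.1.1 hx.2
        (eq_one_of_genFun_eq_one hq_nonneg hq_sum hgcd (hmaps hx) h0)
      exact hx1 (Prod.ext h1.1 h1.2)
    have hq' := (((continuous_const (y := (1 : ℂ))).sub hcont).pow 2).continuousWithinAt.div
      ((continuousWithinAt_const (b := (1 : ℂ))).sub (hden x hx)) hne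
    refine hq'.congr_of_eventuallyEq ?_ (hH x hx1)
    filter_upwards [mem_nhdsWithin_of_mem_nhds (isOpen_ne.mem_nhds hx1)] with y hy using hH y hy
end
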